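/- Let p, m be natural numbers with m ≤ p, let H : Matrix (Fin p) (Fin m) ℝ satisfy Hᵀ * H = 1, let d : Fin m → ℝ with d i > 0 for all i, and let B : Matrix (Fin p) (Fin p) ℝ. Set A⁺ = H * Matrix.diagonal (fun i => (d i)⁻¹) * Hᵀ and E = Matrix.diagonal (fun i => (Real.sqrt (d i))⁻¹). Then (B * A⁺).charpoly = T^(p - m) * (E * Hᵀ * B * H * E).charpoly; in particular the nonzero eigenvalues of B A⁺ coincide (with multiplicity) with those of L^{-1/2} Hᵀ B H L^{-1/2}, i.e. with the eigenvalues Λ of the generalized eigenvalue problem B e = λ A e. -/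

import Mathlib

open Matrix Polynomial

theorem charpoly_B_pseudoinverse
    (p m : ℕ) (hmp : m ≤ p)
    (H : Matrix (Fin p) (Fin m) ℝ) (hH : Hᵀ * H = 1)
    (d : Fin m → ℝ) (hd : ∀ i, d i > 0)
    (B : Matrix (Fin p) (Fin p) ℝ)
    (Aplus : Matrix (Fin p) (Fin p) ℝ)
    (hAplus : Aplus = H * Matrix.diagonal (fun i => (d i)⁻¹) * Hᵀ)
    (E : Matrix (Fin m) (Fin m) ℝ)
    (hE : E = Matrix.diagonal (fun i => (Real.sqrt (d i))⁻¹)) :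
    (B * Aplus).charpoly = Polynomial.X ^ (p - m) * (E * Hᵀ * B * H * E).charpoly := by
  have hEE : Matrix.diagonal (fun i => (d i)⁻¹) = E * E := by
    rw [hE, Matrix.diagonal_mul_diagonal]
    congr 1
    funext i
    rw [← mul_inv, Real.mul_self_sqrt (hd i).le]
  have h1 : B * Aplus = (B * H * E) * (E * Hᵀ) := by
    rw [hAplus, hEE]
    simp only [Matrix.mul_assoc]
  have h2 : E * Hᵀ * B * H * E = (E * Hᵀ) * (B * H * E) := by
    simp only [Matrix.mul_assoc]
  rw [h1, h2, Matrix.charpoly_mul_comm_of_le _ _ (by simpa using hmp)]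
  simp only [Fintype.card_fin]
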